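/- arXiv:2207.07974 — 2 statements merged into one kernel-verified Lean document; each statement's English description precedes it below -/
import Mathlib

section
/- (Lemma 5.2: equilibrium strategy.) Let S ⊆ {1,…,n} with |S| = k, and let p* ∈ Δ_n be defined by p*_i = 1/k if i ∈ S and p*_i = 0 otherwise. Then the pair (p*, p*) is a Nash equilibrium of the zero-sum game with loss matrix A_S for the row (minimizing) player: for every p ∈ Δ_n, ∑_{i,j} p_i·A_S[i,j]·p*_j ≥ 1/k; for every q ∈ Δ_n, ∑_{i,j} p*_i·A_S[i,j]·q_j ≤ 1/k; and ∑_{i,j} p*_i·A_S[i,j]·p*_j = 1/k. -/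
/-! Against the uniform strategy on `S`, each row of `S` loses exactly `1 / #S` and every other row
loses its constant entry, which is no smaller, so no mixed row strategy loses less than `1 / #S`.
Conversely, the matrix is the identity on the rows of `S`, so this strategy, played by the row
player, faces the column player with its own entries as payoffs, and these are at most `1 / #S`.
Applied to the uniform strategy itself, the two bounds meet. -/

/-- The game matrix `A_S`: Alice (the row player) gets loss `4` outside the
support `S`, loss `1` on the diagonal inside `S`, and `0` otherwise. -/
def gameA {n : ℕ} (S : Finset (Fin n)) (i j : Fin n) : ℝ :=
  if i ∈ S then (if i = j then 1 else 0) else 4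

section General

open Finset
open scoped Matrix

variable {ι R : Type*}

theorem dotProduct_mulVec_eq_sum_sum {κ : Type*} [Fintype ι] [Fintype κ] [NonUnitalSemiring R]
    (p : ι → R) (A : Matrix ι κ R) (q : κ → R) :
    p ⬝ᵥ A *ᵥ q = ∑ i, ∑ j, p i * A i j * q j := by
  simp only [dotProduct, Matrix.mulVec, mul_sum, mul_assoc]

section StdSimplex

variable [Fintype ι] [Semiring R] [PartialOrder R] [IsOrderedRing R] {p f : ι → R} {a : R}

theorem le_dotProduct_of_mem_stdSimplex (hp : p ∈ stdSimplex R ι) (hf : ∀ i, a ≤ f i) :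
    a ≤ p ⬝ᵥ f :=
  calc
    a = p ⬝ᵥ fun _ ↦ a := by simp only [dotProduct, ← sum_mul, hp.2, one_mul]
    _ ≤ p ⬝ᵥ f := dotProduct_le_dotProduct_of_nonneg_left hf hp.1

theorem dotProduct_le_of_mem_stdSimplex (hp : p ∈ stdSimplex R ι) (hf : ∀ i, f i ≤ a) :
    f ⬝ᵥ p ≤ a :=
  calc
    f ⬝ᵥ p ≤ (fun _ ↦ a) ⬝ᵥ p := dotProduct_le_dotProduct_of_nonneg_right hf hp.1
    _ = a := by simp only [dotProduct, ← mul_sum, hp.2, mul_one]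

end StdSimplex

variable [DecidableEq ι]

section PenaltyMatrix

/-- The loss matrix that is the identity on the rows of `S` and has the constant entry `c` on all
other rows; `gameA S` is the case `c = 4` over `Fin n`. -/
def penaltyMatrix [Zero R] [One R] (S : Finset ι) (c : R) : Matrix ι ι R :=
  Matrix.of fun i j ↦ if i ∈ S then (if i = j then 1 else 0) else c

variable [Fintype ι] [NonAssocSemiring R]

theorem penaltyMatrix_mulVec_apply (S : Finset ι) (c : R) (q : ι → R) (i : ι) :
    (penaltyMatrix S c *ᵥ q) i = if i ∈ S then q i else c * ∑ j, q j := by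
  split_ifs with hi <;> simp [penaltyMatrix, Matrix.mulVec, dotProduct, hi, mul_sum]

theorem vecMul_penaltyMatrix_of_support_subset {S : Finset ι} {p : ι → R}
    (hp : Function.support p ⊆ S) (c : R) :
    p ᵥ* penaltyMatrix S c = p := by
  ext j
  have entry (i : ι) : p i * penaltyMatrix S c i j = if i = j then p i else 0 := by
    by_cases hi : i ∈ S
    · simp [penaltyMatrix, hi]
    · simp [Function.notMem_support.mp fun h ↦ hi (hp h)]
  simp [Matrix.vecMul, dotProduct, entry]

end PenaltyMatrix

section UniformStrategy

/-- The mixed strategy choosing uniformly among the elements of `S`, as a vector of probabilities.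
It is the zero vector, not a strategy, when `S` is empty. -/
def uniformStrategy (R : Type*) [DivisionSemiring R] (S : Finset ι) (i : ι) : R :=
  if i ∈ S then (#S : R)⁻¹ else 0

theorem support_uniformStrategy_subset [DivisionSemiring R] (S : Finset ι) :
    Function.support (uniformStrategy R S) ⊆ S := by
  intro i hi
  by_contra hiS
  exact hi (if_neg hiS)

theorem sum_uniformStrategy [DivisionSemiring R] [CharZero R] [Fintype ι] {S : Finset ι}
    (hS : S.Nonempty) : ∑ i, uniformStrategy R S i = 1 := by
  simp [uniformStrategy, hS.ne_empty]

variable [DivisionSemiring R] [LinearOrder R] [IsStrictOrderedRing R]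

theorem uniformStrategy_le_inv_card (S : Finset ι) (i : ι) :
    uniformStrategy R S i ≤ (#S : R)⁻¹ := by
  unfold uniformStrategy
  split_ifs
  · exact le_rfl
  · exact inv_nonneg.mpr (Nat.cast_nonneg _)

theorem uniformStrategy_mem_stdSimplex [Fintype ι] {S : Finset ι} (hS : S.Nonempty) :
    uniformStrategy R S ∈ stdSimplex R ι := by
  refine ⟨fun i ↦ ?_, sum_uniformStrategy hS⟩
  unfold uniformStrategy
  split_ifs
  · exact inv_nonneg.mpr (Nat.cast_nonneg _)
  · exact le_rfl

theorem inv_card_le_penaltyMatrix_mulVec_uniformStrategy [Fintype ι] {S : Finset ι}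
    (hS : S.Nonempty) {c : R} (hc : (#S : R)⁻¹ ≤ c) (i : ι) :
    (#S : R)⁻¹ ≤ (penaltyMatrix S c *ᵥ uniformStrategy R S) i := by
  rw [penaltyMatrix_mulVec_apply, sum_uniformStrategy hS, mul_one]
  split_ifs with hi
  · exact (if_pos hi).ge
  · exact hc

end UniformStrategy

theorem game_equilibrium_general [Fintype ι] [DivisionSemiring R] [LinearOrder R]
    [IsStrictOrderedRing R] {S : Finset ι} (hS : S.Nonempty) {c : R} (hc : (#S : R)⁻¹ ≤ c) :
    (∀ p ∈ stdSimplex R ι, (#S : R)⁻¹ ≤ p ⬝ᵥ penaltyMatrix S c *ᵥ uniformStrategy R S) ∧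
    (∀ q ∈ stdSimplex R ι, uniformStrategy R S ⬝ᵥ penaltyMatrix S c *ᵥ q ≤ (#S : R)⁻¹) ∧
    uniformStrategy R S ⬝ᵥ penaltyMatrix S c *ᵥ uniformStrategy R S = (#S : R)⁻¹ := by
  have row_bound : ∀ p ∈ stdSimplex R ι,
      (#S : R)⁻¹ ≤ p ⬝ᵥ penaltyMatrix S c *ᵥ uniformStrategy R S := fun p hp ↦
    le_dotProduct_of_mem_stdSimplex hp (inv_card_le_penaltyMatrix_mulVec_uniformStrategy hS hc)
  have col_bound : ∀ q ∈ stdSimplex R ι,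
      uniformStrategy R S ⬝ᵥ penaltyMatrix S c *ᵥ q ≤ (#S : R)⁻¹ := fun q hq ↦ by
    rw [Matrix.dotProduct_mulVec,
      vecMul_penaltyMatrix_of_support_subset (support_uniformStrategy_subset S)]
    exact dotProduct_le_of_mem_stdSimplex hq (uniformStrategy_le_inv_card S)
  have uniform_mem : uniformStrategy R S ∈ stdSimplex R ι := uniformStrategy_mem_stdSimplex hS
  exact ⟨row_bound, col_bound,
    (col_bound _ uniform_mem).antisymm (row_bound _ uniform_mem)⟩

end General

theorem gameA_eq_penaltyMatrix {n : ℕ} (S : Finset (Fin n)) : gameA S = penaltyMatrix S 4 :=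
  rfl

/-- **Lemma 5.2 (equilibrium strategy).** The uniform strategy `p*` on `S`
forms, paired with itself, a Nash equilibrium of the zero-sum game with loss
matrix `A_S` for the row (minimizing) player: every row deviation gives loss
at least `1/k`, every column deviation gives loss at most `1/k`, and the pair
`(p*, p*)` attains value exactly `1/k`. -/
theorem game_equilibrium (n k : ℕ) (hn : 0 < n) (hk1 : 1 ≤ k) (hkn : k ≤ n)
    (S : Finset (Fin n)) (hS : S.card = k)
    (pstar : Fin n → ℝ) (hpstar : ∀ i, pstar i = if i ∈ S then (1 : ℝ) / k else 0) :
    (∀ p : Fin n → ℝ, (∀ i, 0 ≤ p i) → (∑ i, p i) = 1 →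
      ∑ i, ∑ j, p i * gameA S i j * pstar j ≥ 1 / k) ∧
    (∀ q : Fin n → ℝ, (∀ j, 0 ≤ q j) → (∑ j, q j) = 1 →
      ∑ i, ∑ j, pstar i * gameA S i j * q j ≤ 1 / k) ∧
    ∑ i, ∑ j, pstar i * gameA S i j * pstar j = 1 / k := by
  subst hS
  obtain rfl : pstar = uniformStrategy ℝ S :=
    funext fun i ↦ by rw [hpstar, one_div, uniformStrategy]
  have inv_card_le_four : (S.card : ℝ)⁻¹ ≤ 4 :=
    (inv_le_one_of_one_le₀ (mod_cast hk1)).trans (by norm_num)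
  simpa only [gameA_eq_penaltyMatrix, dotProduct_mulVec_eq_sum_sum, stdSimplex,
    Set.mem_ofPred_eq, and_imp, one_div]
    using game_equilibrium_general (Finset.card_pos.mp hk1) inv_card_le_four
end

section
/- (Structural characterization of low-loss games.) Assume k ≥ 4. Let p ∈ Δ_n and let S ⊆ {1,…,n} with |S| = k satisfy ℓ(p,S) < 2/k. Then the set I := {i ∈ {1,…,n} : p_i ≥ 1/(2k)} satisfies I ⊆ S and |I| ≥ k/4. -/
/-- `ℓ(p,S)`: the worst-case loss of row strategy `p` in the game `A_S`,
i.e. `max_j ∑_i p i * A_S[i,j]`. -/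
noncomputable def gameLoss {n : ℕ} (hn : 0 < n) (p : Fin n → ℝ) (S : Finset (Fin n)) : ℝ :=
  Finset.univ.sup' ⟨⟨0, hn⟩, Finset.mem_univ _⟩ (fun j => ∑ i, p i * gameA S i j)

open Finset

theorem sum_le_card_nsmul_add_card_sdiff_nsmul {ι M : Type*} [DecidableEq ι] [AddCommMonoid M]
    [PartialOrder M] [IsOrderedAddMonoid M] {s t : Finset ι} (hts : t ⊆ s) {f : ι → M} {a b : M}
    (ha : ∀ i ∈ t, f i ≤ a) (hb : ∀ i ∈ s \ t, f i ≤ b) :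
    ∑ i ∈ s, f i ≤ #t • a + #(s \ t) • b := by
  rw [← sum_sdiff hts, add_comm]
  exact add_le_add (sum_le_card_nsmul t f a ha) (sum_le_card_nsmul (s \ t) f b hb)

section GameLoss

variable {n : ℕ} {hn : 0 < n} {p : Fin n → ℝ} {S : Finset (Fin n)} {τ : ℝ}

theorem sum_mul_gameA (p : Fin n → ℝ) (S : Finset (Fin n)) (j : Fin n) :
    ∑ i, p i * gameA S i j = (if j ∈ S then p j else 0) + 4 * ∑ i ∈ Sᶜ, p i := by
  rw [← sum_add_sum_compl S, ← sum_ite_eq' S j p, mul_sum]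
  congr 1 <;> refine sum_congr rfl fun i hi => ?_
  · simp [gameA, hi]
  · rw [gameA, if_neg (mem_compl.mp hi), mul_comm]

theorem ite_add_four_mul_sum_compl_le_gameLoss (hn : 0 < n) (p : Fin n → ℝ) (S : Finset (Fin n))
    (j : Fin n) :
    (if j ∈ S then p j else 0) + 4 * ∑ i ∈ Sᶜ, p i ≤ gameLoss hn p S :=
  sum_mul_gameA p S j ▸ le_sup' (fun j => ∑ i, p i * gameA S i j) (mem_univ j)

theorem four_mul_sum_compl_le_gameLoss (hn : 0 < n) (hp0 : ∀ i, 0 ≤ p i) (S : Finset (Fin n)) :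
    4 * ∑ i ∈ Sᶜ, p i ≤ gameLoss hn p S := by
  refine le_trans (le_add_of_nonneg_left ?_)
    (ite_add_four_mul_sum_compl_le_gameLoss hn p S ⟨0, hn⟩)
  split_ifs
  exacts [hp0 _, le_rfl]

theorem mem_of_gameLoss_lt_four_mul (hp0 : ∀ i, 0 ≤ p i) {i : Fin n}
    (hi : gameLoss hn p S < 4 * p i) : i ∈ S := by
  by_contra hiS
  have hle : p i ≤ ∑ i ∈ Sᶜ, p i := single_le_sum (fun i _ => hp0 i) (mem_compl.mpr hiS)
  linarith [four_mul_sum_compl_le_gameLoss hn hp0 S]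

theorem exists_le_apply_of_gameLoss_lt (hp0 : ∀ i, 0 ≤ p i) (hp1 : ∑ i, p i = 1)
    (hτ : (#S + 1) * τ ≤ 1) (hloss : gameLoss hn p S < 4 * τ) : ∃ i, τ ≤ p i := by
  by_contra! hlight
  have hS : ∑ i ∈ S, p i ≤ #S * τ := by
    simpa only [nsmul_eq_mul] using sum_le_card_nsmul S p τ fun i _ => (hlight i).le
  linarith [four_mul_sum_compl_le_gameLoss hn hp0 S, sum_add_sum_compl S p]

theorem one_sub_card_mul_lt_three_mul_card (hp0 : ∀ i, 0 ≤ p i) (hp1 : ∑ i, p i = 1)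
    (hτ : (#S + 1) * τ ≤ 1) (hloss : gameLoss hn p S < 4 * τ) {I : Finset (Fin n)}
    (hI : ∀ i, i ∈ I ↔ τ ≤ p i) : 1 - #S * τ < 3 * τ * #I := by
  set q := ∑ i ∈ Sᶜ, p i
  have hIS : I ⊆ S := fun i hi => mem_of_gameLoss_lt_four_mul hp0 (by linarith [(hI i).mp hi])
  have hheavy : ∀ i ∈ I, p i ≤ gameLoss hn p S - 4 * q := fun i hi => by
    simpa only [if_pos (hIS hi), ← le_sub_iff_add_le] using
      ite_add_four_mul_sum_compl_le_gameLoss hn p S i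
  have hlight : ∀ i ∈ S \ I, p i ≤ τ := fun i hi =>
    (not_le.mp (mt (hI i).mpr (mem_sdiff.mp hi).2)).le
  have hmass : 1 - q ≤ #I * (gameLoss hn p S - 4 * q) + (#S - #I) * τ := by
    rw [← hp1, ← sum_add_sum_compl S p, add_sub_cancel_right, ← cast_card_sdiff hIS]
    simpa only [nsmul_eq_mul] using sum_le_card_nsmul_add_card_sdiff_nsmul hIS hheavy hlight
  have hcard : (1 : ℝ) ≤ #I := by
    obtain ⟨i, hi⟩ := exists_le_apply_of_gameLoss_lt hp0 hp1 hτ hloss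
    exact_mod_cast card_pos.mpr ⟨i, (hI i).mpr hi⟩
  have hq0 : 0 ≤ q := sum_nonneg fun i _ => hp0 i
  have hsaving : q ≤ #I * (4 * q) := by linarith [le_mul_of_one_le_left hq0 hcard]
  have hcost : #I * gameLoss hn p S < #I * (4 * τ) := by gcongr
  linarith

end GameLoss

theorem game_loss_structure_general {n k : ℕ} (hn : 0 < n) (hk : 0 < k) {p : Fin n → ℝ}
    (hp0 : ∀ i, 0 ≤ p i) (hp1 : ∑ i, p i = 1) {S : Finset (Fin n)} (hS : #S = k)
    (hloss : gameLoss hn p S < 2 / k) {I : Finset (Fin n)}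
    (hI : ∀ i, i ∈ I ↔ 1 / (2 * k) ≤ p i) :
    I ⊆ S ∧ (k : ℝ) / 3 < #I := by
  have hk1 : (1 : ℝ) ≤ k := by exact_mod_cast hk
  set τ : ℝ := 1 / (2 * k) with hτ
  have hτ0 : 0 < τ := by positivity
  have hkτ : k * τ = 1 / 2 := by rw [hτ]; field_simp
  have hSτ : (#S + 1) * τ ≤ 1 := by
    rw [hS]
    linarith [le_mul_of_one_le_left hτ0.le hk1]
  have hbound : (2 : ℝ) / k = 4 * τ := by
    rw [hτ]
    field_simp
    norm_num
  rw [hbound] at hloss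
  refine ⟨fun i hi => mem_of_gameLoss_lt_four_mul hp0 (by linarith [(hI i).mp hi]), ?_⟩
  have hcount : 1 - k * τ < 3 * τ * #I :=
    hS ▸ one_sub_card_mul_lt_three_mul_card hp0 hp1 hSτ hloss hI
  refine lt_of_mul_lt_mul_right ?_ (mul_pos three_pos hτ0).le
  linarith

/-- **Structural characterization of low-loss games.** Assume `k ≥ 4`. If the
probability vector `p` and the size-`k` set `S` satisfy `ℓ(p,S) < 2/k`, then
the set `I = {i : p i ≥ 1/(2k)}` satisfies `I ⊆ S` and `|I| ≥ k/4`. -/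
theorem game_loss_structure (n k : ℕ) (hn : 0 < n) (hk4 : 4 ≤ k) (hkn : k ≤ n)
    (p : Fin n → ℝ) (hp0 : ∀ i, 0 ≤ p i) (hp1 : (∑ i, p i) = 1)
    (S : Finset (Fin n)) (hS : S.card = k)
    (hloss : gameLoss hn p S < 2 / k)
    (I : Finset (Fin n)) (hI : ∀ i, i ∈ I ↔ p i ≥ 1 / (2 * k)) :
    I ⊆ S ∧ (I.card : ℝ) ≥ (k : ℝ) / 4 := by
  have ⟨hIS, hcard⟩ := game_loss_structure_general hn (by lia) hp0 hp1 hS hloss hI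
  exact ⟨hIS, by linarith [k.cast_nonneg (α := ℝ)]⟩
end
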